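/- arXiv:1010.4905 — 3 statements merged into one kernel-verified Lean document; each statement's English description precedes it below -/
import Mathlib

section
/- Let f be a real-valued harmonic function of the open unit disk U = {z ∈ ℂ : |z| < 1} into the open interval (-1, 1). Then the gradient of f at the origin satisfies the sharp inequality |∇f(0)| ≤ 4/π. -/
open Complex Metric Real

/-!
On a disk, a harmonic function `f` with values in `(a, b)` is the real part of a holomorphic `F`,
and `|∇f| = |F'|`. The map `w ↦ exp (iπ (w - a) / (b - a))` carries the strip `a < re w < b` onto
the upper half-plane, and a Cayley transform carries the half-plane onto the unit disk, sending the
image of the centre to `0`. The Schwarz lemma for the composition bounds `|F'|` at the centre.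
-/

open InnerProductSpace Set
open scoped ComplexConjugate Gradient Laplacian

theorem laplacian_eq_fderiv_fderiv_complexPlane {E : Type*} [NormedAddCommGroup E] [NormedSpace ℝ E]
    {f : ℂ → E} {z : ℂ} (hf : ContDiffAt ℝ 2 f z) :
    Δ f z = fderiv ℝ (fun w ↦ fderiv ℝ f w 1) z 1 + fderiv ℝ (fun w ↦ fderiv ℝ f w I) z I := by
  have hf' : DifferentiableAt ℝ (fderiv ℝ f) z :=
    (hf.fderiv_right (m := 1) (by norm_num)).differentiableAt (by norm_num)
  rw [fderiv_clm_apply hf' (by fun_prop), fderiv_clm_apply hf' (by fun_prop)]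
  simp [laplacian_eq_iteratedFDeriv_complexPlane, iteratedFDeriv_two_apply]

theorem harmonicOnNhd_of_contDiffOn_of_laplacian_eq_zero {V E : Type*} [NormedAddCommGroup V]
    [InnerProductSpace ℝ V] [FiniteDimensional ℝ V] [NormedAddCommGroup E] [NormedSpace ℝ E]
    {f : V → E} {s : Set V} (hs : IsOpen s) (hf : ContDiffOn ℝ 2 f s)
    (hΔ : ∀ x ∈ s, Δ f x = 0) : HarmonicOnNhd f s := fun _ hx ↦
  ⟨hf.contDiffAt (hs.mem_nhds hx), Filter.eventually_of_mem (hs.mem_nhds hx) hΔ⟩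

theorem hasGradientAt_re_of_hasDerivAt {F : ℂ → ℂ} {F' z : ℂ} (hF : HasDerivAt F F' z) :
    HasGradientAt (fun w ↦ (F w).re) (conj F') z := by
  rw [hasGradientAt_iff_hasFDerivAt]
  refine (reCLM.hasFDerivAt.comp z (hF.hasFDerivAt.restrictScalars ℝ)).congr_fderiv ?_
  ext v
  simp [Complex.inner]

theorem dist_lt_dist_conj_of_im_pos {w a : ℂ} (hw : 0 < w.im) (ha : 0 < a.im) :
    dist w a < dist w (conj a) := by
  have hpos : 0 < dist w (conj a) := by
    refine dist_pos.2 fun h ↦ ?_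
    have him : w.im = -a.im := by rw [h, conj_im]
    linarith
  have htanh := UpperHalfPlane.tanh_half_dist ⟨w, hw⟩ ⟨a, ha⟩
  exact (div_lt_one hpos).1 (htanh ▸ Real.tanh_lt_one _)

theorem hasDerivAt_cayley_comp {g : ℂ → ℂ} {g' c : ℂ} (hg : HasDerivAt g g' c)
    (hc : (g c).im ≠ 0) :
    HasDerivAt (fun z ↦ (g z - g c) / (g z - conj (g c))) (g' / (2 * (g c).im * I)) c := by
  have hsub : g c - conj (g c) = 2 * (g c).im * I := by simp [sub_conj]
  have hne : g c - conj (g c) ≠ 0 := by simp [hsub, hc]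
  refine ((hg.sub_const (g c)).div (hg.sub_const (conj (g c))) hne).congr_deriv ?_
  rw [← hsub]
  field_simp
  ring

section SchwarzPick

variable {g : ℂ → ℂ} {c : ℂ} {R : ℝ}

theorem norm_deriv_le_of_im_pos (hR : 0 < R) (hg : DifferentiableOn ℂ g (ball c R))
    (him : ∀ z ∈ ball c R, 0 < (g z).im) : ‖deriv g c‖ ≤ 2 * (g c).im / R := by
  have hc : c ∈ ball c R := mem_ball_self hR
  have hlt (z : ℂ) (hz : z ∈ ball c R) : ‖g z - g c‖ < ‖g z - conj (g c)‖ := by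
    simpa only [dist_eq_norm_sub] using dist_lt_dist_conj_of_im_pos (him z hz) (him c hc)
  let φ : ℂ → ℂ := fun z ↦ (g z - g c) / (g z - conj (g c))
  have hφ : DifferentiableOn ℂ φ (ball c R) := (hg.sub_const _).div (hg.sub_const _) fun z hz ↦
    norm_pos_iff.1 <| (norm_nonneg _).trans_lt (hlt z hz)
  have hφ_maps : MapsTo φ (ball c R) (closedBall (φ c) 1) := fun z hz ↦ by
    have hφc : φ c = 0 := by simp [φ]
    rw [hφc, mem_closedBall_zero_iff, norm_div]
    exact div_le_one_of_le₀ (hlt z hz).le (norm_nonneg _)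
  have hφ' : deriv φ c = deriv g c / (2 * (g c).im * I) :=
    (hasDerivAt_cayley_comp (hg.hasDerivAt (ball_mem_nhds c hR)) (him c hc).ne').deriv
  have hschwarz : ‖deriv g c‖ / (2 * (g c).im) ≤ 1 / R := by
    simpa [hφ', abs_of_pos (him c hc)] using norm_deriv_le_div_of_mapsTo_ball hφ hφ_maps hR
  rw [div_le_iff₀ (mul_pos two_pos (him c hc))] at hschwarz
  exact hschwarz.trans_eq (by ring)

theorem norm_deriv_le_of_im_mem_Ioo (hR : 0 < R) (hg : DifferentiableOn ℂ g (ball c R))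
    (him : ∀ z ∈ ball c R, (g z).im ∈ Ioo 0 π) : ‖deriv g c‖ ≤ 2 * Real.sin (g c).im / R := by
  have hexp_im (z : ℂ) (hz : z ∈ ball c R) : 0 < (cexp (g z)).im := by
    rw [exp_im]
    exact mul_pos (Real.exp_pos _) (Real.sin_pos_of_mem_Ioo (him z hz))
  have hexp' : deriv (fun z ↦ cexp (g z)) c = cexp (g c) * deriv g c :=
    (hg.hasDerivAt (ball_mem_nhds c hR)).cexp.deriv
  have hbound := norm_deriv_le_of_im_pos hR hg.cexp hexp_im
  rw [hexp', norm_mul, norm_exp, exp_im] at hbound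
  refine le_of_mul_le_mul_left (hbound.trans_eq ?_) (Real.exp_pos (g c).re)
  ring

theorem norm_deriv_le_of_re_mem_Ioo {a b : ℝ} (hR : 0 < R) (hg : DifferentiableOn ℂ g (ball c R))
    (hre : ∀ z ∈ ball c R, (g z).re ∈ Ioo a b) :
    ‖deriv g c‖ ≤ 2 * (b - a) / (π * R) * Real.sin (π / (b - a) * ((g c).re - a)) := by
  have hab : 0 < b - a := by
    have hc := hre c (mem_ball_self hR)
    linarith [hc.1, hc.2]
  set k : ℝ := π / (b - a) with hk
  have hk_pos : 0 < k := div_pos pi_pos hab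
  have him (z : ℂ) : (k * I * (g z - a)).im = k * ((g z).re - a) := by simp
  have hstrip (z : ℂ) (hz : z ∈ ball c R) : (k * I * (g z - a)).im ∈ Ioo 0 π := by
    obtain ⟨ha, hb⟩ := hre z hz
    rw [him]
    refine ⟨mul_pos hk_pos (sub_pos.2 ha), ?_⟩
    calc k * ((g z).re - a) < k * (b - a) := by gcongr
      _ = π := div_mul_cancel₀ π hab.ne'
  have hderiv : deriv (fun z ↦ k * I * (g z - a)) c = k * I * deriv g c :=
    (((hg.hasDerivAt (ball_mem_nhds c hR)).sub_const (a : ℂ)).const_mul (k * I)).deriv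
  have hbound := norm_deriv_le_of_im_mem_Ioo hR ((hg.sub_const (a : ℂ)).const_mul (k * I)) hstrip
  have hnorm : ‖k * I * deriv g c‖ = k * ‖deriv g c‖ := by simp [abs_of_pos hk_pos]
  rw [hderiv, hnorm, him] at hbound
  refine le_of_mul_le_mul_left (hbound.trans_eq ?_) hk_pos
  rw [hk]
  field_simp

end SchwarzPick

theorem grad_bound_real_harmonic_at_zero_general {f : ℂ → ℝ} {c : ℂ} {R a b : ℝ} (hR : 0 < R)
    (hf : HarmonicOnNhd f (ball c R)) (hf_range : ∀ z ∈ ball c R, f z ∈ Ioo a b) :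
    ‖∇ f c‖ ≤ 2 * (b - a) / (π * R) * Real.sin (π / (b - a) * (f c - a)) := by
  obtain ⟨F, hF, hF_re⟩ := hf.exists_analyticOnNhd_ball_re_eq
  have hc : c ∈ ball c R := mem_ball_self hR
  have hgrad : ∇ f c = conj (deriv F c) :=
    ((hasGradientAt_re_of_hasDerivAt (hF c hc).differentiableAt.hasDerivAt).congr_of_eventuallyEq
      (hF_re.symm.eventuallyEq_of_mem (ball_mem_nhds c hR))).gradient
  rw [hgrad, RCLike.norm_conj, ← hF_re hc]
  exact norm_deriv_le_of_re_mem_Ioo hR hF.differentiableOn fun z hz ↦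
    mem_of_eq_of_mem (hF_re hz) (hf_range z hz)

/-- **Schwarz lemma for real harmonic functions at the origin**
(Axler–Bourdon–Ramey, Theorem 6.26). If `f` is a real harmonic function of the
unit disk into `(-1, 1)`, then `|∇f(0)| ≤ 4/π`. -/
theorem grad_bound_real_harmonic_at_zero
    (f : ℂ → ℝ)
    (hf_smooth : ContDiffOn ℝ 2 f (ball (0 : ℂ) 1))
    (hf_harm : ∀ z ∈ ball (0 : ℂ) 1,
      fderiv ℝ (fun w => fderiv ℝ f w 1) z 1
        + fderiv ℝ (fun w => fderiv ℝ f w Complex.I) z Complex.I = 0)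
    (hf_range : ∀ z ∈ ball (0 : ℂ) 1, f z ∈ Set.Ioo (-1 : ℝ) 1) :
    ‖gradient f 0‖ ≤ 4 / π := by
  have hf : HarmonicOnNhd f (ball 0 1) :=
    harmonicOnNhd_of_contDiffOn_of_laplacian_eq_zero isOpen_ball hf_smooth fun z hz ↦
      (laplacian_eq_fderiv_fderiv_complexPlane
        (hf_smooth.contDiffAt (isOpen_ball.mem_nhds hz))).trans (hf_harm z hz)
  calc ‖∇ f 0‖
      ≤ 2 * (1 - -1) / (π * 1) * Real.sin (π / (1 - -1) * (f 0 - -1)) :=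
        grad_bound_real_harmonic_at_zero_general one_pos hf hf_range
    _ ≤ 2 * (1 - -1) / (π * 1) * 1 := by gcongr; exact Real.sin_le_one _
    _ = 4 / π := by norm_num
end

section
/- Let b : U → U be an analytic function of the open unit disk U = {z ∈ ℂ : |z| < 1} into itself, and define a(z) = (2i/π) · Log((1 + b(z))/(1 - b(z))), where Log denotes the principal branch of the complex logarithm (well-defined since (1+b(z))/(1-b(z)) has positive real part). Then a is an analytic map of U into the vertical strip S = {w ∈ ℂ : -1 < Re w < 1}, and for every z ∈ U, |a'(z)| ≤ (4/π) · (1 - (Re a(z))²)/(1 - |z|²). -/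
open Complex Metric Real

/-!
For `f = (1 + b) / (1 - b)`, which takes values in the right half-plane, `a = (2i/π) log f`, so
`Re a = -(2/π) arg f` and `|a'| = (2/π) |f'| / |f|`. The Schwarz–Pick inequality for the half-plane,
`|f'(z)| ≤ 2 Re f(z) / (1 - |z|²)`, turns this into
`|a'(z)| ≤ (4/π) cos (arg f(z)) / (1 - |z|²)`, and the concavity of `sin` gives
`cos t ≤ 1 - (2t/π)²` for `|t| ≤ π/2`.
-/

open Set
open scoped ComplexConjugate

section Trigonometric

variable {c θ t : ℝ}

lemma mul_sin_le_sin_mul (hc₀ : 0 ≤ c) (hc₁ : c ≤ 1) (hθ₀ : 0 ≤ θ) (hθ : θ ≤ π) :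
    c * Real.sin θ ≤ Real.sin (c * θ) := by
  simpa using strictConcaveOn_sin_Icc.concaveOn.2 (left_mem_Icc.2 pi_pos.le) ⟨hθ₀, hθ⟩
    (sub_nonneg.2 hc₁) hc₀ (sub_add_cancel 1 c)

lemma sq_mul_one_sub_cos_le (hc : |c| ≤ 1) (hθ : |θ| ≤ 2 * π) :
    c ^ 2 * (1 - Real.cos θ) ≤ 1 - Real.cos (c * θ) := by
  have one_sub_cos (x : ℝ) : 1 - Real.cos x = 2 * Real.sin (|x| / 2) ^ 2 := by
    rw [Real.sin_sq_eq_half_sub, mul_div_cancel₀ _ two_ne_zero, Real.cos_abs]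
    ring
  have half_nonneg : 0 ≤ |θ| / 2 := by positivity
  have half_le : |θ| / 2 ≤ π := by linarith
  have sin_half_nonneg : 0 ≤ Real.sin (|θ| / 2) :=
    Real.sin_nonneg_of_nonneg_of_le_pi half_nonneg half_le
  calc c ^ 2 * (1 - Real.cos θ) = 2 * (|c| * Real.sin (|θ| / 2)) ^ 2 := by
        rw [one_sub_cos, mul_pow, sq_abs]
        ring
    _ ≤ 2 * Real.sin (|c| * (|θ| / 2)) ^ 2 := by
        gcongr
        exact mul_sin_le_sin_mul (abs_nonneg c) hc half_nonneg half_le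
    _ = 1 - Real.cos (c * θ) := by rw [one_sub_cos, abs_mul, mul_div_assoc]

lemma cos_le_one_sub_two_div_pi_mul_sq (ht : |t| ≤ π / 2) :
    Real.cos t ≤ 1 - (2 / π * t) ^ 2 := by
  have ratio_le : |2 / π * t| ≤ 1 := by
    rw [abs_mul, abs_of_pos (by positivity), div_mul_eq_mul_div, div_le_one pi_pos]
    linarith
  have right_angle_le : |π / 2| ≤ 2 * π := by
    rw [abs_of_pos pi_div_two_pos]
    linarith [pi_pos]
  have chord := sq_mul_one_sub_cos_le ratio_le right_angle_le
  rw [Real.cos_pi_div_two, show 2 / π * t * (π / 2) = t by field_simp] at chord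
  linarith

end Trigonometric

section DiskAutomorphism

variable {p q : ℂ}

lemma one_sub_sq_norm_pos (hp : ‖p‖ < 1) : 0 < 1 - ‖p‖ ^ 2 :=
  sub_pos.2 (pow_lt_one₀ (norm_nonneg p) hp two_ne_zero)

/-- The automorphism of the unit disk taking `0` to `p`, for `‖p‖ < 1`; it moves the base point of
the Schwarz lemma from `0` to `p`. -/
noncomputable def diskTranslation (p z : ℂ) : ℂ :=
  (z + p) / (1 + conj p * z)

@[simp]
lemma diskTranslation_zero (p : ℂ) : diskTranslation p 0 = p := by
  simp [diskTranslation]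

lemma sq_norm_one_add_conj_mul_sub_sq_norm_add (p q : ℂ) :
    ‖1 + conj p * q‖ ^ 2 - ‖q + p‖ ^ 2 = (1 - ‖p‖ ^ 2) * (1 - ‖q‖ ^ 2) := by
  simp only [Complex.sq_norm, normSq_apply, add_re, add_im, mul_re, mul_im, conj_re, conj_im,
    one_re, one_im]
  ring

lemma norm_add_lt_norm_one_add_conj_mul (hp : ‖p‖ < 1) (hq : ‖q‖ < 1) :
    ‖q + p‖ < ‖1 + conj p * q‖ := by
  refine lt_of_pow_lt_pow_left₀ 2 (norm_nonneg _) (sub_pos.1 ?_)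
  rw [sq_norm_one_add_conj_mul_sub_sq_norm_add]
  exact mul_pos (one_sub_sq_norm_pos hp) (one_sub_sq_norm_pos hq)

lemma one_add_conj_mul_ne_zero (hp : ‖p‖ < 1) (hq : ‖q‖ < 1) : 1 + conj p * q ≠ 0 :=
  norm_pos_iff.1 ((norm_nonneg _).trans_lt (norm_add_lt_norm_one_add_conj_mul hp hq))

lemma mapsTo_diskTranslation (hp : ‖p‖ < 1) :
    MapsTo (diskTranslation p) (ball 0 1) (ball 0 1) := by
  intro q hq
  rw [mem_ball_zero_iff] at hq ⊢
  rw [diskTranslation, norm_div, div_lt_one (norm_pos_iff.2 (one_add_conj_mul_ne_zero hp hq))]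
  exact norm_add_lt_norm_one_add_conj_mul hp hq

lemma hasDerivAt_diskTranslation (h : 1 + conj p * q ≠ 0) :
    HasDerivAt (diskTranslation p) ((1 - conj p * p) / (1 + conj p * q) ^ 2) q := by
  refine (((hasDerivAt_id q).add_const p).div (((hasDerivAt_id q).const_mul (conj p)).const_add 1)
    h).congr_deriv ?_
  simp only [id]
  ring

lemma differentiableOn_diskTranslation (hp : ‖p‖ < 1) :
    DifferentiableOn ℂ (diskTranslation p) (ball 0 1) := fun _ hq =>
  (hasDerivAt_diskTranslation
    (one_add_conj_mul_ne_zero hp (mem_ball_zero_iff.1 hq))).differentiableAt.differentiableWithinAt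

lemma hasDerivAt_diskTranslation_zero (p : ℂ) :
    HasDerivAt (diskTranslation p) ((1 - ‖p‖ ^ 2 : ℝ) : ℂ) 0 := by
  simpa [conj_mul'] using hasDerivAt_diskTranslation (p := p) (q := 0) (by simp)

lemma norm_deriv_le_div_one_sub_sq_of_mapsTo_ball {E : Type*} [NormedAddCommGroup E]
    [NormedSpace ℂ E] {f : ℂ → E} {z : ℂ} {R : ℝ} (hf : DifferentiableOn ℂ f (ball 0 1))
    (hz : ‖z‖ < 1) (hmaps : MapsTo f (ball 0 1) (closedBall (f z) R)) :
    ‖deriv f z‖ ≤ R / (1 - ‖z‖ ^ 2) := by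
  have one_sub_pos : 0 < 1 - ‖z‖ ^ 2 := one_sub_sq_norm_pos hz
  have schwarz : ‖deriv (f ∘ diskTranslation z) 0‖ ≤ R / 1 :=
    norm_deriv_le_div_of_mapsTo_ball
      (hf.comp (differentiableOn_diskTranslation hz) (mapsTo_diskTranslation hz))
      (by simpa using hmaps.comp (mapsTo_diskTranslation hz)) one_pos
  have f_hasDerivAt : HasDerivAt f (deriv f z) (diskTranslation z 0) := by
    rw [diskTranslation_zero]
    exact (hf.differentiableAt (isOpen_ball.mem_nhds (by simpa using hz))).hasDerivAt
  rw [(f_hasDerivAt.scomp 0 (hasDerivAt_diskTranslation_zero z)).deriv, norm_smul, norm_real,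
    Real.norm_of_nonneg one_sub_pos.le, div_one] at schwarz
  rwa [le_div_iff₀' one_sub_pos]

end DiskAutomorphism

section HalfPlane

variable {w w₀ : ℂ}

lemma sq_norm_add_conj_sub_sq_norm_sub (w w₀ : ℂ) :
    ‖w + conj w₀‖ ^ 2 - ‖w - w₀‖ ^ 2 = 4 * w.re * w₀.re := by
  simp only [Complex.sq_norm, normSq_apply, add_re, add_im, sub_re, sub_im, conj_re, conj_im]
  ring

lemma norm_sub_lt_norm_add_conj (hw : 0 < w.re) (hw₀ : 0 < w₀.re) :
    ‖w - w₀‖ < ‖w + conj w₀‖ := by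
  refine lt_of_pow_lt_pow_left₀ 2 (norm_nonneg _) (sub_pos.1 ?_)
  rw [sq_norm_add_conj_sub_sq_norm_sub]
  positivity

lemma add_conj_ne_zero (hw : 0 < w.re) (hw₀ : 0 < w₀.re) : w + conj w₀ ≠ 0 :=
  norm_pos_iff.1 ((norm_nonneg _).trans_lt (norm_sub_lt_norm_add_conj hw hw₀))

lemma norm_sub_div_add_conj_lt_one (hw : 0 < w.re) (hw₀ : 0 < w₀.re) :
    ‖(w - w₀) / (w + conj w₀)‖ < 1 := by
  rw [norm_div, div_lt_one (norm_pos_iff.2 (add_conj_ne_zero hw hw₀))]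
  exact norm_sub_lt_norm_add_conj hw hw₀

lemma one_add_div_one_sub_re_pos (hw : ‖w‖ < 1) : 0 < ((1 + w) / (1 - w)).re := by
  have one_sub_ne_zero : 1 - w ≠ 0 := fun h => by
    simp [← sub_eq_zero.1 h] at hw
  have re_eq : ((1 + w) / (1 - w)).re = (1 - ‖w‖ ^ 2) / normSq (1 - w) := by
    rw [Complex.div_re, ← add_div, Complex.sq_norm, normSq_apply w]
    simp only [add_re, add_im, sub_re, sub_im, one_re, one_im]
    ring
  rw [re_eq]
  exact div_pos (one_sub_sq_norm_pos hw) (normSq_pos.2 one_sub_ne_zero)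

variable {f : ℂ → ℂ} {z : ℂ}

lemma norm_deriv_le_of_re_pos (hf : DifferentiableOn ℂ f (ball 0 1))
    (hre : ∀ x ∈ ball (0 : ℂ) 1, 0 < (f x).re) (hz : z ∈ ball (0 : ℂ) 1) :
    ‖deriv f z‖ ≤ 2 * (f z).re / (1 - ‖z‖ ^ 2) := by
  have den_ne {x : ℂ} (hx : x ∈ ball (0 : ℂ) 1) : f x + conj (f z) ≠ 0 :=
    add_conj_ne_zero (hre x hx) (hre z hz)
  let g : ℂ → ℂ := fun x => (f x - f z) / (f x + conj (f z))
  have g_differentiableOn : DifferentiableOn ℂ g (ball 0 1) :=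
    (hf.sub_const _).div (hf.add_const _) fun _ => den_ne
  have g_mapsTo : MapsTo g (ball 0 1) (closedBall (g z) 1) := fun x hx => by
    simpa [g] using (norm_sub_div_add_conj_lt_one (hre x hx) (hre z hz)).le
  have f_hasDerivAt := (hf.differentiableAt (isOpen_ball.mem_nhds hz)).hasDerivAt
  have g_hasDerivAt : HasDerivAt g (deriv f z / ((2 * (f z).re : ℝ) : ℂ)) z := by
    refine ((f_hasDerivAt.sub_const (f z)).div (f_hasDerivAt.add_const (conj (f z)))
      (den_ne hz)).congr_deriv ?_
    rw [← add_conj]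
    field_simp [den_ne hz]
    ring
  have two_re_pos : 0 < 2 * (f z).re := mul_pos two_pos (hre z hz)
  have schwarz := norm_deriv_le_div_one_sub_sq_of_mapsTo_ball g_differentiableOn
    (mem_ball_zero_iff.1 hz) g_mapsTo
  rwa [g_hasDerivAt.deriv, norm_div, norm_real, Real.norm_of_nonneg two_re_pos.le,
    div_le_iff₀ two_re_pos, one_div_mul_eq_div] at schwarz

lemma norm_deriv_div_le_of_re_pos (hf : DifferentiableOn ℂ f (ball 0 1))
    (hre : ∀ x ∈ ball (0 : ℂ) 1, 0 < (f x).re) (hz : z ∈ ball (0 : ℂ) 1) :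
    ‖deriv f z / f z‖ ≤ 2 * Real.cos (arg (f z)) / (1 - ‖z‖ ^ 2) := by
  have f_ne_zero : f z ≠ 0 := fun h => by simpa [h] using hre z hz
  calc ‖deriv f z / f z‖ = ‖deriv f z‖ / ‖f z‖ := norm_div _ _
    _ ≤ 2 * (f z).re / (1 - ‖z‖ ^ 2) / ‖f z‖ := by
        gcongr
        exact norm_deriv_le_of_re_pos hf hre hz
    _ = 2 * Real.cos (arg (f z)) / (1 - ‖z‖ ^ 2) := by
        rw [cos_arg f_ne_zero]
        ring

end HalfPlane

section Strip

variable {w : ℂ}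

/-- The conformal map `w ↦ (2i/π) log w` of the right half-plane onto the strip
`{ζ | -1 < Re ζ < 1}`. -/
noncomputable def halfPlaneToStrip (w : ℂ) : ℂ :=
  2 * I / π * Complex.log w

lemma halfPlaneToStrip_re (w : ℂ) : (halfPlaneToStrip w).re = -(2 / π * arg w) := by
  rw [halfPlaneToStrip, show 2 * I / (π : ℂ) = ((2 / π : ℝ) : ℂ) * I by push_cast; ring, mul_assoc,
    re_ofReal_mul, I_mul_re, log_im, mul_neg]

lemma abs_halfPlaneToStrip_re_lt_one (hw : 0 < w.re) : |(halfPlaneToStrip w).re| < 1 := by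
  have arg_lt : |arg w| < π / 2 := abs_arg_lt_pi_div_two_iff.2 (Or.inl hw)
  rw [halfPlaneToStrip_re, abs_neg, abs_mul, abs_of_pos (by positivity), div_mul_eq_mul_div,
    div_lt_one pi_pos]
  linarith

lemma cos_arg_le_one_sub_halfPlaneToStrip_re_sq (hw : 0 < w.re) :
    Real.cos (arg w) ≤ 1 - (halfPlaneToStrip w).re ^ 2 := by
  rw [halfPlaneToStrip_re, neg_sq]
  exact cos_le_one_sub_two_div_pi_mul_sq (abs_arg_lt_pi_div_two_iff.2 (Or.inl hw)).le

variable {f : ℂ → ℂ} {f' z : ℂ}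

lemma hasDerivAt_halfPlaneToStrip_comp (hf : HasDerivAt f f' z) (hfz : f z ∈ slitPlane) :
    HasDerivAt (fun x => halfPlaneToStrip (f x)) (2 * I / π * (f' / f z)) z :=
  (hf.clog hfz).const_mul _

lemma norm_deriv_halfPlaneToStrip_comp_le (hf : DifferentiableOn ℂ f (ball 0 1))
    (hre : ∀ x ∈ ball (0 : ℂ) 1, 0 < (f x).re) (hz : z ∈ ball (0 : ℂ) 1) :
    ‖deriv (fun x => halfPlaneToStrip (f x)) z‖ ≤
      4 / π * (1 - (halfPlaneToStrip (f z)).re ^ 2) / (1 - ‖z‖ ^ 2) := by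
  have one_sub_pos : 0 < 1 - ‖z‖ ^ 2 := one_sub_sq_norm_pos (mem_ball_zero_iff.1 hz)
  have f_hasDerivAt := (hf.differentiableAt (isOpen_ball.mem_nhds hz)).hasDerivAt
  have norm_factor : ‖2 * I / (π : ℂ)‖ = 2 / π := by
    simp [abs_of_pos pi_pos]
  calc ‖deriv (fun x => halfPlaneToStrip (f x)) z‖ = 2 / π * ‖deriv f z / f z‖ := by
        rw [(hasDerivAt_halfPlaneToStrip_comp f_hasDerivAt (Or.inl (hre z hz))).deriv, norm_mul,
          norm_factor]
    _ ≤ 2 / π * (2 * Real.cos (arg (f z)) / (1 - ‖z‖ ^ 2)) := by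
        gcongr
        exact norm_deriv_div_le_of_re_pos hf hre hz
    _ = 4 / π * Real.cos (arg (f z)) / (1 - ‖z‖ ^ 2) := by ring
    _ ≤ 4 / π * (1 - (halfPlaneToStrip (f z)).re ^ 2) / (1 - ‖z‖ ^ 2) := by
        gcongr
        exact cos_arg_le_one_sub_halfPlaneToStrip_re_sq (hre z hz)

end Strip

/-- The key step in the proof of Kalaj–Vuorinen, Theorem 1: if `b : U → U` is
analytic and `a(z) = (2i/π) Log((1 + b(z))/(1 - b(z)))`, then `a` is an analytic
map of the unit disk into the strip `{w : -1 < Re w < 1}` and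
`|a'(z)| ≤ (4/π)(1 - (Re a(z))²)/(1 - |z|²)`. -/
theorem strip_map_deriv_bound
    (b : ℂ → ℂ)
    (hb_an : DifferentiableOn ℂ b (ball (0 : ℂ) 1))
    (hb_range : ∀ z ∈ ball (0 : ℂ) 1, b z ∈ ball (0 : ℂ) 1)
    (a : ℂ → ℂ)
    (ha : ∀ z, a z = (2 * Complex.I / (π : ℂ)) * Complex.log ((1 + b z) / (1 - b z))) :
    (DifferentiableOn ℂ a (ball (0 : ℂ) 1)
      ∧ ∀ z ∈ ball (0 : ℂ) 1, -1 < (a z).re ∧ (a z).re < 1)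
    ∧ ∀ z ∈ ball (0 : ℂ) 1,
        ‖deriv a z‖ ≤ (4 / π) * (1 - (a z).re ^ 2) / (1 - ‖z‖ ^ 2) := by
  let f : ℂ → ℂ := fun z => (1 + b z) / (1 - b z)
  have f_re_pos : ∀ z ∈ ball (0 : ℂ) 1, 0 < (f z).re := fun z hz =>
    one_add_div_one_sub_re_pos (mem_ball_zero_iff.1 (hb_range z hz))
  have one_sub_ne_zero : ∀ z ∈ ball (0 : ℂ) 1, 1 - b z ≠ 0 := fun z hz h => by
    simpa [f, h] using f_re_pos z hz
  have f_differentiableOn : DifferentiableOn ℂ f (ball 0 1) :=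
    (hb_an.const_add 1).div (hb_an.const_sub 1) one_sub_ne_zero
  obtain rfl : a = fun z => halfPlaneToStrip (f z) := funext ha
  refine ⟨⟨?_, fun z hz => ?_⟩, fun z hz => ?_⟩
  · exact (f_differentiableOn.clog fun z hz => Or.inl (f_re_pos z hz)).const_mul _
  · exact abs_lt.1 (abs_halfPlaneToStrip_re_lt_one (f_re_pos z hz))
  · exact norm_deriv_halfPlaneToStrip_comp_le f_differentiableOn f_re_pos hz
end

section
/- Let f be an analytic (holomorphic) function of the open unit disk U = {z ∈ ℂ : |z| < 1} into the open unit ball Bₙ = {w ∈ ℂⁿ : |w| < 1} of ℂⁿ. Then at every point z ∈ U where the function z ↦ |f(z)| is differentiable, |∇|f|(z)| ≤ (1 - |f(z)|²)/(1 - |z|²). -/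
open Complex Metric Real

/-!
Choose a norming functional `φ` of `f z`: `‖φ‖ ≤ 1` and `φ (f z) = ‖f z‖`. The function
`‖f w‖ - re (φ (f w))` is nonnegative and vanishes at `w = z`, so at `z` the real derivatives of
`‖f‖` and of `re (φ ∘ f)` agree. The latter is bounded by the modulus of the complex derivative of
the scalar function `φ ∘ f`, to which the Schwarz–Pick lemma applies; since `|φ (f z)| = ‖f z‖`,
its bound is the asserted one.
-/

open scoped ComplexConjugate

section DiscAut

variable {a w : ℂ}

/-- For `‖a‖ < 1`, the conformal automorphism `w ↦ (w + a) / (1 + ā w)` of the unit disk sending `0`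
to `a`, with inverse `discAut (-a)`. It moves base points to and from the origin in the
Schwarz–Pick lemma. As a function it is defined for all `a w : ℂ`, with junk value `0` at a pole. -/
noncomputable def discAut (a w : ℂ) : ℂ := (w + a) / (1 + conj a * w)

@[simp]
lemma discAut_zero_right (a : ℂ) : discAut a 0 = a := by simp [discAut]

@[simp]
lemma discAut_neg_self (a : ℂ) : discAut (-a) a = 0 := by simp [discAut]

lemma one_add_conj_mul_ne_zero_s10 (ha : ‖a‖ < 1) (hw : ‖w‖ ≤ 1) : 1 + conj a * w ≠ 0 := by
  intro h
  have hprod : ‖a‖ * ‖w‖ = 1 := by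
    simpa using congrArg norm (eq_neg_of_add_eq_zero_right h)
  exact (mul_lt_one_of_nonneg_of_lt_one_left (norm_nonneg a) ha hw).ne hprod

lemma one_sub_norm_discAut_sq (h : 1 + conj a * w ≠ 0) :
    1 - ‖discAut a w‖ ^ 2 = (1 - ‖a‖ ^ 2) * (1 - ‖w‖ ^ 2) / ‖1 + conj a * w‖ ^ 2 := by
  have hsq : ‖1 + conj a * w‖ ^ 2 - ‖w + a‖ ^ 2 = (1 - ‖a‖ ^ 2) * (1 - ‖w‖ ^ 2) := by
    simp only [← normSq_eq_norm_sq, normSq_apply, add_re, add_im, mul_re, mul_im, conj_re, conj_im,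
      one_re, one_im]
    ring
  have hne : ‖1 + conj a * w‖ ^ 2 ≠ 0 := pow_ne_zero 2 (norm_ne_zero_iff.2 h)
  rw [discAut, norm_div, div_pow, one_sub_div hne, hsq]

lemma norm_discAut_le_one (ha : ‖a‖ < 1) (hw : ‖w‖ ≤ 1) : ‖discAut a w‖ ≤ 1 := by
  have ha_sq : ‖a‖ ^ 2 ≤ 1 := pow_le_one₀ (norm_nonneg a) ha.le
  have hw_sq : ‖w‖ ^ 2 ≤ 1 := pow_le_one₀ (norm_nonneg w) hw
  rw [← sq_le_one_iff₀ (norm_nonneg _), ← sub_nonneg,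
    one_sub_norm_discAut_sq (one_add_conj_mul_ne_zero_s10 ha hw)]
  exact div_nonneg (mul_nonneg (sub_nonneg.2 ha_sq) (sub_nonneg.2 hw_sq)) (sq_nonneg _)

lemma norm_discAut_lt_one (ha : ‖a‖ < 1) (hw : ‖w‖ < 1) : ‖discAut a w‖ < 1 := by
  have hne := one_add_conj_mul_ne_zero_s10 ha hw.le
  have ha_sq : ‖a‖ ^ 2 < 1 := pow_lt_one₀ (norm_nonneg a) ha two_ne_zero
  have hw_sq : ‖w‖ ^ 2 < 1 := pow_lt_one₀ (norm_nonneg w) hw two_ne_zero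
  rw [← sq_lt_one_iff₀ (norm_nonneg _), ← sub_pos, one_sub_norm_discAut_sq hne]
  exact div_pos (mul_pos (sub_pos.2 ha_sq) (sub_pos.2 hw_sq)) (pow_pos (norm_pos_iff.2 hne) 2)

lemma hasDerivAt_discAut (h : 1 + conj a * w ≠ 0) :
    HasDerivAt (discAut a) ((1 - ‖a‖ ^ 2) / (1 + conj a * w) ^ 2) w := by
  have hnum : HasDerivAt (fun v => v + a) 1 w := (hasDerivAt_id w).add_const a
  have hden : HasDerivAt (fun v => 1 + conj a * v) (conj a) w := by
    simpa using ((hasDerivAt_id w).const_mul (conj a)).const_add 1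
  refine (hnum.div hden h).congr_deriv ?_
  rw [← conj_mul']
  ring

lemma hasDerivAt_discAut_zero (a : ℂ) : HasDerivAt (discAut a) (1 - ‖a‖ ^ 2) 0 := by
  simpa using hasDerivAt_discAut (a := a) (w := 0) (by simp)

lemma hasDerivAt_discAut_neg_self (ha : ‖a‖ < 1) :
    HasDerivAt (discAut (-a)) (1 - ‖a‖ ^ 2 : ℂ)⁻¹ a := by
  have hden : 1 + conj (-a) * a = 1 - (‖a‖ : ℂ) ^ 2 := by rw [← conj_mul', map_neg]; ring
  have hne : 1 + conj (-a) * a ≠ 0 := one_add_conj_mul_ne_zero_s10 (by rwa [norm_neg]) ha.le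
  refine (hasDerivAt_discAut hne).congr_deriv ?_
  rw [hden] at hne ⊢
  rw [norm_neg]
  field_simp

end DiscAut

section SchwarzPick

lemma norm_one_sub_norm_sq {E : Type*} [SeminormedAddGroup E] {x : E} (hx : ‖x‖ ≤ 1) :
    ‖(1 - ‖x‖ ^ 2 : ℂ)‖ = 1 - ‖x‖ ^ 2 := by
  have hnonneg : 0 ≤ 1 - ‖x‖ ^ 2 := sub_nonneg.2 (pow_le_one₀ (norm_nonneg x) hx)
  exact_mod_cast Complex.norm_of_nonneg hnonneg

lemma deriv_eq_zero_of_isLocalMax_norm {F : Type*} [NormedAddCommGroup F] [NormedSpace ℂ F]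
    [StrictConvexSpace ℝ F] {f : ℂ → F} {c : ℂ} (hf : ∀ᶠ w in nhds c, DifferentiableAt ℂ f w)
    (hmax : IsLocalMax (fun w => ‖f w‖) c) : deriv f c = 0 := by
  have hconst : f =ᶠ[nhds c] fun _ => f c := eventually_eq_of_isLocalMax_norm hf hmax
  exact hconst.deriv_eq.trans (deriv_const c (f c))

variable {g : ℂ → ℂ}

lemma norm_deriv_center_le_of_mapsTo_closedBall {c : ℂ} {R : ℝ} (hR : 0 < R)
    (hg : DifferentiableOn ℂ g (ball c R)) (hmaps : Set.MapsTo g (ball c R) (closedBall 0 1)) :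
    ‖deriv g c‖ ≤ (1 - ‖g c‖ ^ 2) / R := by
  simp only [Set.MapsTo, mem_closedBall_zero_iff] at hmaps
  have hball : ball c R ∈ nhds c := ball_mem_nhds c hR
  rcases (hmaps (mem_ball_self hR)).eq_or_lt with hone | hlt
  · have hmax : IsLocalMax (fun w => ‖g w‖) c := by
      filter_upwards [hball] with w hw
      exact (hmaps hw).trans_eq hone.symm
    simp [deriv_eq_zero_of_isLocalMax_norm (hg.eventually_differentiableAt hball) hmax, hone]
  · have hneg : ‖-g c‖ < 1 := by rwa [norm_neg]
    have hdiff : DifferentiableOn ℂ (discAut (-g c) ∘ g) (ball c R) := fun w hw =>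
      (hasDerivAt_discAut
        (one_add_conj_mul_ne_zero_s10 hneg (hmaps hw))).differentiableAt.comp_differentiableWithinAt
          w (hg w hw)
    have hmaps_comp : Set.MapsTo (discAut (-g c) ∘ g) (ball c R)
        (closedBall ((discAut (-g c) ∘ g) c) 1) := fun w hw => by
      simpa using norm_discAut_le_one hneg (hmaps hw)
    have hderiv : deriv (discAut (-g c) ∘ g) c = (1 - ‖g c‖ ^ 2 : ℂ)⁻¹ * deriv g c :=
      ((hasDerivAt_discAut_neg_self hlt).comp c (hg.differentiableAt hball).hasDerivAt).deriv
    have hpos : 0 < 1 - ‖g c‖ ^ 2 := sub_pos.2 (pow_lt_one₀ (norm_nonneg _) hlt two_ne_zero)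
    have hschwarz := norm_deriv_le_div_of_mapsTo_ball hdiff hmaps_comp hR
    rw [hderiv, norm_mul, norm_inv, norm_one_sub_norm_sq hlt.le, inv_mul_le_iff₀ hpos] at hschwarz
    rwa [mul_one_div] at hschwarz

theorem schwarz_pick_norm_deriv_le (hg : DifferentiableOn ℂ g (ball 0 1))
    (hmaps : Set.MapsTo g (ball 0 1) (closedBall 0 1)) {z : ℂ} (hz : z ∈ ball (0 : ℂ) 1) :
    ‖deriv g z‖ ≤ (1 - ‖g z‖ ^ 2) / (1 - ‖z‖ ^ 2) := by
  have hz_lt : ‖z‖ < 1 := mem_ball_zero_iff.1 hz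
  have haut_maps : Set.MapsTo (discAut z) (ball 0 1) (ball 0 1) := fun w hw =>
    mem_ball_zero_iff.2 (norm_discAut_lt_one hz_lt (mem_ball_zero_iff.1 hw))
  have haut_diff : DifferentiableOn ℂ (discAut z) (ball 0 1) := fun w hw =>
    (hasDerivAt_discAut (one_add_conj_mul_ne_zero_s10 hz_lt
      (mem_ball_zero_iff.1 hw).le)).differentiableAt.differentiableWithinAt
  have hderiv : deriv (g ∘ discAut z) 0 = deriv g z * (1 - ‖z‖ ^ 2) :=
    ((hg.differentiableAt (isOpen_ball.mem_nhds hz)).hasDerivAt.comp_of_eq 0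
      (hasDerivAt_discAut_zero z) (discAut_zero_right z).symm).deriv
  have hcenter := norm_deriv_center_le_of_mapsTo_closedBall one_pos
    (hg.comp haut_diff haut_maps) (hmaps.comp haut_maps)
  have hpos : 0 < 1 - ‖z‖ ^ 2 := sub_pos.2 (pow_lt_one₀ (norm_nonneg z) hz_lt two_ne_zero)
  rw [le_div_iff₀ hpos]
  simpa [hderiv, norm_one_sub_norm_sq hz_lt.le] using hcenter

end SchwarzPick

section NormingFunctional

lemma fderiv_norm_eq_comp_fderiv {G E : Type*} [NormedAddCommGroup G] [NormedSpace ℝ G]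
    [NormedAddCommGroup E] [NormedSpace ℝ E] {f : G → E} {z : G} {φ : StrongDual ℝ E}
    (hφ : ‖φ‖ ≤ 1) (hφz : φ (f z) = ‖f z‖) (hf : DifferentiableAt ℝ f z)
    (hnorm : DifferentiableAt ℝ (fun w => ‖f w‖) z) :
    fderiv ℝ (fun w => ‖f w‖) z = φ ∘L fderiv ℝ f z := by
  have hmin : IsLocalMin (fun w => ‖f w‖ - φ (f w)) z := by
    refine Filter.Eventually.of_forall fun w => ?_
    have hle : φ (f w) ≤ ‖f w‖ :=
      (le_abs_self _).trans (by simpa using φ.le_of_opNorm_le hφ (f w))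
    simpa [hφz] using hle
  exact sub_eq_zero.1 <| hmin.hasFDerivAt_eq_zero <|
    hnorm.hasFDerivAt.sub (φ.hasFDerivAt.comp z hf.hasFDerivAt)

lemma norm_fderiv_norm_le_norm_fderiv_comp {G E : Type*} [NormedAddCommGroup G] [NormedSpace ℂ G]
    [NormedAddCommGroup E] [NormedSpace ℂ E] {f : G → E} {z : G} {φ : StrongDual ℂ E}
    (hφ : ‖φ‖ ≤ 1) (hφz : φ (f z) = ‖f z‖) (hf : DifferentiableAt ℂ f z)
    (hnorm : DifferentiableAt ℝ (fun w => ‖f w‖) z) :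
    ‖fderiv ℝ (fun w => ‖f w‖) z‖ ≤ ‖fderiv ℂ (φ ∘ f) z‖ := by
  have hre_norm : ‖reCLM ∘L φ.restrictScalars ℝ‖ ≤ 1 := by
    simpa using (reCLM.opNorm_comp_le (φ.restrictScalars ℝ)).trans (by simpa using hφ)
  have hre_z : (reCLM ∘L φ.restrictScalars ℝ) (f z) = ‖f z‖ := by simp [hφz]
  rw [fderiv_norm_eq_comp_fderiv hre_norm hre_z (hf.restrictScalars ℝ) hnorm,
    hf.fderiv_restrictScalars ℝ, fderiv_comp z φ.differentiableAt hf, φ.fderiv]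
  refine ContinuousLinearMap.opNorm_le_bound _ (norm_nonneg _) fun v => ?_
  exact (abs_re_le_norm _).trans ((φ ∘L fderiv ℂ f z).le_opNorm v)

end NormingFunctional

lemma norm_gradient_eq_norm_fderiv {𝕜 F : Type*} [RCLike 𝕜] [NormedAddCommGroup F]
    [InnerProductSpace 𝕜 F] [CompleteSpace F] (u : F → 𝕜) (x : F) :
    ‖gradient u x‖ = ‖fderiv 𝕜 u x‖ :=
  (InnerProductSpace.toDual 𝕜 F).symm.norm_map _

theorem grad_norm_bound_analytic_map_general {E : Type*} [NormedAddCommGroup E] [NormedSpace ℂ E]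
    {f : ℂ → E} (hf : DifferentiableOn ℂ f (ball 0 1))
    (hmaps : Set.MapsTo f (ball 0 1) (closedBall 0 1)) {z : ℂ} (hz : z ∈ ball (0 : ℂ) 1)
    (hnorm : DifferentiableAt ℝ (fun w => ‖f w‖) z) :
    ‖gradient (fun w => ‖f w‖) z‖ ≤ (1 - ‖f z‖ ^ 2) / (1 - ‖z‖ ^ 2) := by
  obtain ⟨φ, hφ, hφz⟩ := exists_dual_vector'' ℂ (f z)
  have hφ_maps : Set.MapsTo φ (closedBall 0 1) (closedBall 0 1) := fun x hx => by
    rw [mem_closedBall_zero_iff] at hx ⊢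
    simpa using φ.le_of_opNorm_le_of_le hφ hx
  calc ‖gradient (fun w => ‖f w‖) z‖
      = ‖fderiv ℝ (fun w => ‖f w‖) z‖ := norm_gradient_eq_norm_fderiv _ z
    _ ≤ ‖fderiv ℂ (φ ∘ f) z‖ :=
      norm_fderiv_norm_le_norm_fderiv_comp hφ hφz
        (hf.differentiableAt (isOpen_ball.mem_nhds hz)) hnorm
    _ = ‖deriv (φ ∘ f) z‖ := norm_deriv_eq_norm_fderiv.symm
    _ ≤ (1 - ‖(φ ∘ f) z‖ ^ 2) / (1 - ‖z‖ ^ 2) :=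
      schwarz_pick_norm_deriv_le (φ.differentiable.comp_differentiableOn hf)
        (hφ_maps.comp hmaps) hz
    _ = (1 - ‖f z‖ ^ 2) / (1 - ‖z‖ ^ 2) := by simp [hφz]

/-- **Pavlović's Schwarz lemma for the norm of a holomorphic map** (Pavlović,
Theorem 1.1). If `f` is an analytic map of the unit disk into the unit ball of
`ℂⁿ`, then wherever `z ↦ |f(z)|` is differentiable,
`|∇|f|(z)| ≤ (1 - |f(z)|²)/(1 - |z|²)`. -/
theorem grad_norm_bound_analytic_map
    (n : ℕ) (f : ℂ → EuclideanSpace ℂ (Fin n))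
    (hf_an : DifferentiableOn ℂ f (ball (0 : ℂ) 1))
    (hf_range : ∀ z ∈ ball (0 : ℂ) 1, ‖f z‖ < 1) :
    ∀ z ∈ ball (0 : ℂ) 1, DifferentiableAt ℝ (fun w => ‖f w‖) z →
      ‖gradient (fun w => ‖f w‖) z‖ ≤ (1 - ‖f z‖ ^ 2) / (1 - ‖z‖ ^ 2) := by
  exact fun z hz => grad_norm_bound_analytic_map_general hf_an
    (fun w hw => mem_closedBall_zero_iff.2 (hf_range w hw).le) hz
end
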